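/- Let w = x^{a_1}y^{b_1}···x^{a_r}y^{b_r} be a reduced word of complexity r such that over ℚ its trace polynomial factors as f_w(s,u,t) = D_r(q(s,u,t)) for some polynomial q ∈ ℚ[s,u,t]. Then w = (x^{a_1}y^{b_1})^r; that is, a_i = a_1 and b_i = b_1 for all i = 1,…,r. -/

import Mathlib

open Matrix Polynomial

abbrev SL2 (K : Type) [CommRing K] : Type := Matrix.SpecialLinearGroup (Fin 2) K

abbrev PSL2 (K : Type) [CommRing K] : Type := SL2 K ⧸ Subgroup.center (SL2 K)

/-- Evaluation of a word `w ∈ F₂` at a pair of group elements. -/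
def wordEval {G : Type*} [Group G] (w : FreeGroup (Fin 2)) (g₁ g₂ : G) : G :=
  (FreeGroup.lift ![g₁, g₂]) w

/-- The word map `P_{w,G} : G × G → G` for `G = SL(2,K)`. -/
def wordMap (w : FreeGroup (Fin 2)) (K : Type) [CommRing K] :
    SL2 K × SL2 K → SL2 K := fun g => wordEval w g.1 g.2

/-- The point `(tr x, tr xy, tr y)`. -/
def trPoint {K : Type} [CommRing K] (x y : SL2 K) : Fin 3 → K :=
  ![Matrix.trace (x : Matrix (Fin 2) (Fin 2) K),
    Matrix.trace ((x * y : SL2 K) : Matrix (Fin 2) (Fin 2) K),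
    Matrix.trace (y : Matrix (Fin 2) (Fin 2) K)]

/-- `f ∈ ℤ[s,u,t]` is the trace polynomial of the word `w`. -/
def IsTracePolynomial (w : FreeGroup (Fin 2)) (f : MvPolynomial (Fin 3) ℤ) : Prop :=
  ∀ (K : Type) [CommRing K], ∀ x y : SL2 K,
    Matrix.trace ((wordEval w x y : SL2 K) : Matrix (Fin 2) (Fin 2) K) =
      MvPolynomial.eval (trPoint x y) (MvPolynomial.map (Int.castRingHom K) f)

/-- `f : X → Y` is `ε`-equidistributed. -/
def IsEquidistributed {X Y : Type*} (f : X → Y) (ε : ℝ) : Prop :=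
  ∃ Y' : Set Y,
    (1 - ε) * (Nat.card Y) < (Nat.card Y' : ℝ) ∧
    ∀ y ∈ Y',
      |(Nat.card {x : X // f x = y} : ℝ) - (Nat.card X : ℝ) / (Nat.card Y)| <
        ε * (Nat.card X) / (Nat.card Y)

/-- The family of word maps on `SL(2,p^n)` is `p`-equidistributed. -/
def IsPEquidistributed (w : FreeGroup (Fin 2)) (p : ℕ) (hp : p.Prime) : Prop :=
  letI : Fact p.Prime := ⟨hp⟩
  ∃ ε : ℕ → ℝ,
    Filter.Tendsto (fun n : ℕ => ε (p ^ n)) Filter.atTop (nhds 0) ∧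
    ∀ᶠ n : ℕ in Filter.atTop,
      IsEquidistributed (wordMap w (GaloisField p n)) (ε (p ^ n))

/-- The family of word maps on `SL(2,q)`, `q` ranging over all prime powers,
is equidistributed. -/
def IsEquidistributedFamily (w : FreeGroup (Fin 2)) : Prop :=
  ∃ ε : ℕ → ℝ,
    Filter.Tendsto ε Filter.atTop (nhds 0) ∧
    ∀ (p : ℕ) (hp : p.Prime),
      letI : Fact p.Prime := ⟨hp⟩
      ∀ᶠ n : ℕ in Filter.atTop,
        IsEquidistributed (wordMap w (GaloisField p n)) (ε (p ^ n))

/-- Reduction of an integral polynomial mod `p`. -/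
noncomputable def reduceMod (p : ℕ) (P : MvPolynomial (Fin 3) ℤ) : MvPolynomial (Fin 3) (ZMod p) :=
  MvPolynomial.map (Int.castRingHom (ZMod p)) P

/-- `P = h ∘ Q` with `deg Q ≥ 1`, `deg h ≥ 2`. -/
def IsCompositePoly (F : Type) [CommRing F] (P : MvPolynomial (Fin 3) F) : Prop :=
  ∃ (Q : MvPolynomial (Fin 3) F) (h : Polynomial F),
    1 ≤ Q.totalDegree ∧ 2 ≤ h.natDegree ∧ P = Polynomial.aeval Q h

def IsPComposite (p : ℕ) (P : MvPolynomial (Fin 3) ℤ) : Prop :=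
  IsCompositePoly (ZMod p) (reduceMod p P)

/-- `h` is a permutation polynomial of every finite extension of `F_p`. -/
def IsPermAllExt (p : ℕ) (h : Polynomial (ZMod p)) : Prop :=
  ∀ (K : Type) [Field K] [Algebra (ZMod p) K] [Finite K],
    Function.Bijective fun z : K => Polynomial.aeval z h

def IsPSpecial (p : ℕ) (P : MvPolynomial (Fin 3) ℤ) : Prop :=
  IsPComposite p P ∧
    ∃ (Q : MvPolynomial (Fin 3) (ZMod p)) (h : Polynomial (ZMod p)),
      1 ≤ Q.totalDegree ∧ 2 ≤ h.natDegree ∧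
      reduceMod p P = Polynomial.aeval Q h ∧ IsPermAllExt p h

def AlmostNoncomposite (P : MvPolynomial (Fin 3) ℤ) : Prop :=
  ∀ p : ℕ, p.Prime → ¬ IsPComposite p P ∨ IsPSpecial p P

/-- The reduced word `x^{a₁}y^{b₁} ⋯ x^{a_r}y^{b_r}`. -/
def wordOf {r : ℕ} (a b : Fin r → ℤ) : FreeGroup (Fin 2) :=
  (List.ofFn fun i : Fin r =>
    FreeGroup.of (0 : Fin 2) ^ a i * FreeGroup.of (1 : Fin 2) ^ b i).prod

/-!
Evaluate `w` at an upper triangular `x` with eigenvalues `m^{±1}` and a lower triangular `y` with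
eigenvalues `n^{±1}` whose off-diagonal entry carries a free parameter `z`. The trace of `w` is then
a polynomial of degree `r` in `z`, with leading coefficient the product of all
`(m^{a_i} - m^{-a_i}) (n^{b_i} - n^{-b_i})`, and it equals `D_r` of a polynomial in `z`, which is
therefore linear. Its values `g` at `z = 0` and `h` at `z = -1`, where `x` and `y` have a common
eigenvector, satisfy `D_r(g) = m^A n^B + m^{-A} n^{-B}` and `D_r(h) = m^A n^{-B} + m^{-A} n^B`,
with `A = ∑ a_i` and `B = ∑ b_i`, while `(g - h)^r` is the leading coefficient.

Fix `n`. Letting `m` tend to infinity and comparing degrees gives `∑ |a_i| ≤ |∑ a_i|`, so all the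
`a_i` have the same sign. Letting `m` pass through a primitive `2 |a_j|`-th root of unity, the
factor with index `i` vanishes if and only if `a_j` divides `a_i`, and then to first order; since
the product is an `r`-th power up to a constant, either all factors vanish or none does. Hence the
`|a_i|` divide one another. The roles of `a` and `b` are symmetric.
-/

section SubInv

variable {R S : Type*} [CommRing R] [CommRing S]

/-- `u - u⁻¹` in the ambient ring, that is `2 sinh θ` for `u = exp θ`. -/
def subInv (u : Rˣ) : R := u - ↑u⁻¹

/-- `u + u⁻¹` in the ambient ring, the trace of `diag(u, u⁻¹)`. -/
def addInv (u : Rˣ) : R := u + ↑u⁻¹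

lemma subInv_inv (u : Rˣ) : subInv u⁻¹ = -subInv u := by
  simp [subInv]

lemma addInv_inv (u : Rˣ) : addInv u⁻¹ = addInv u := by
  simp [addInv, add_comm]

lemma subInv_zpow_eq_or_eq_neg (u : Rˣ) (k : ℤ) :
    subInv (u ^ k) = subInv (u ^ k.natAbs) ∨ subInv (u ^ k) = -subInv (u ^ k.natAbs) := by
  rcases Int.natAbs_eq k with hk | hk
  · left
    conv_lhs => rw [hk, zpow_natCast]
  · right
    conv_lhs => rw [hk, _root_.zpow_neg, zpow_natCast, subInv_inv]

lemma addInv_mul_sub (u v : Rˣ) :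
    addInv (u * v) - subInv u * subInv v = addInv (u * v⁻¹) := by
  simp only [addInv, subInv, mul_inv, inv_inv, Units.val_mul]
  ring

lemma subInv_map (φ : R →+* S) (u : Rˣ) : subInv (Units.map φ u) = φ (subInv u) := by
  simp [subInv, ← map_inv]

lemma addInv_map (φ : R →+* S) (u : Rˣ) : addInv (Units.map φ u) = φ (addInv u) := by
  simp [addInv, ← map_inv]

lemma subInv_mul_self (u : Rˣ) : subInv u * u = ↑(u ^ 2) - 1 := by
  simp [subInv, sub_mul, sq]

lemma subInv_eq_zero_iff {u : Rˣ} : subInv u = 0 ↔ u ^ 2 = 1 := by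
  rw [← u.mul_left_eq_zero, subInv_mul_self, sub_eq_zero, Units.val_eq_one]

lemma subInv_map_zpow_ne_zero {L : Type*} [Field L] [Nontrivial R] (φ : L →+* R) {u : Lˣ}
    {k : ℤ} (h : subInv (u ^ k) ≠ 0) : subInv (Units.map (φ : L →* R) u ^ k) ≠ 0 := by
  rw [← map_zpow, subInv_map]
  exact (map_ne_zero φ).mpr h

lemma subInv_two_zpow_ne_zero {L : Type*} [Field L] [CharZero L] {k : ℤ} (hk : k ≠ 0) :
    subInv (Units.mk0 (2 : L) two_ne_zero ^ k) ≠ 0 := by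
  have two_zpow : ((2 : ℚ) ^ k) ^ 2 ≠ 1 := by
    rw [Ne, pow_eq_one_iff_of_nonneg (by positivity) two_ne_zero,
      zpow_eq_one_iff_right₀ zero_le_two (by norm_num)]
    exact hk
  rw [Ne, subInv_eq_zero_iff, ← Units.val_eq_one, Units.val_pow_eq_pow_val,
    Units.val_zpow_eq_zpow_val, Units.val_mk0]
  simpa using (Rat.cast_injective (α := L)).ne two_zpow

end SubInv

section Dickson

variable {R : Type*} [CommRing R]

lemma natDegree_dickson_le (k : ℕ) (a : R) (n : ℕ) : (dickson k a n).natDegree ≤ n := by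
  induction n using Nat.twoStepInduction with
  | zero =>
    rw [dickson_zero, ← C_ofNat, ← C_eq_natCast, ← C_sub, natDegree_C]
  | one => simpa using natDegree_X_le
  | more n ih ih' =>
    rw [dickson_add_two]
    refine (natDegree_sub_le _ _).trans (max_le ?_ ?_)
    · exact (natDegree_mul_le_of_le natDegree_X_le ih').trans (by lia)
    · exact (natDegree_C_mul_le _ _).trans (ih.trans (by lia))

lemma coeff_dickson_succ_self (k : ℕ) (a : R) (n : ℕ) :
    (dickson k a (n + 1)).coeff (n + 1) = 1 := by
  induction n with
  | zero => simp
  | succ n ih =>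
    have : (dickson k a n).coeff (n + 2) = 0 :=
      coeff_eq_zero_of_natDegree_lt ((natDegree_dickson_le k a n).trans_lt (by lia))
    rw [dickson_add_two, coeff_sub, coeff_X_mul, ih, coeff_C_mul, this, mul_zero, sub_zero]

lemma monic_dickson (k : ℕ) (a : R) {n : ℕ} (hn : 0 < n) : (dickson k a n).Monic := by
  obtain ⟨n, rfl⟩ := Nat.exists_eq_add_of_lt hn
  exact monic_of_natDegree_le_of_coeff_eq_one _ (natDegree_dickson_le k a _)
    (by simpa using coeff_dickson_succ_self k a n)

lemma natDegree_dickson [Nontrivial R] (k : ℕ) (a : R) {n : ℕ} (hn : 0 < n) :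
    (dickson k a n).natDegree = n := by
  obtain ⟨n, rfl⟩ := Nat.exists_eq_add_of_lt hn
  refine natDegree_eq_of_le_of_coeff_ne_zero (natDegree_dickson_le k a _) ?_
  simp [coeff_dickson_succ_self]

end Dickson

section PolynomialMatrix

variable {ι R : Type*} [Fintype ι] [DecidableEq ι] [CommRing R]

lemma natDegree_matPolyEquiv_le_iff {N : Matrix ι ι R[X]} {d : ℕ} :
    (matPolyEquiv N).natDegree ≤ d ↔ ∀ i j, (N i j).natDegree ≤ d := by
  simp only [natDegree_le_iff_coeff_eq_zero, ← Matrix.ext_iff, matPolyEquiv_coeff_apply,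
    Matrix.zero_apply]
  exact ⟨fun h i j k hk => h k hk i j, fun h k hk i j => h i j k hk⟩

lemma natDegree_matrix_list_prod_le (l : List (Matrix ι ι R[X])) (d : ℕ)
    (hl : ∀ N ∈ l, ∀ i j, (N i j).natDegree ≤ d) (i j : ι) :
    (l.prod i j).natDegree ≤ l.length * d := by
  refine natDegree_matPolyEquiv_le_iff.mp ?_ i j
  rw [map_list_prod]
  refine (natDegree_list_prod_le _).trans ?_
  simpa using List.sum_le_card_nsmul ((l.map matPolyEquiv).map natDegree) d
    (by simpa [natDegree_matPolyEquiv_le_iff] using hl)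

lemma coeff_matrix_list_prod (l : List (Matrix ι ι R[X])) (d : ℕ)
    (hl : ∀ N ∈ l, ∀ i j, (N i j).natDegree ≤ d) (i j : ι) :
    (l.prod i j).coeff (l.length * d) = (l.map fun N => N.map (coeff · d)).prod i j := by
  have hcoeff : (fun N : Matrix ι ι R[X] => N.map (coeff · d)) =
      fun N => (matPolyEquiv N).coeff d := by
    ext N i j
    rw [matPolyEquiv_coeff_apply, Matrix.map_apply]
  rw [← matPolyEquiv_coeff_apply, map_list_prod, hcoeff]
  simpa [Function.comp_def] using congr_fun₂ (coeff_list_prod_of_natDegree_le (l.map matPolyEquiv) d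
    (by simpa [natDegree_matPolyEquiv_le_iff] using hl)) i j

lemma list_prod_lowerTriangular_diag (l : List (Matrix (Fin 2) (Fin 2) R))
    (hl : ∀ N ∈ l, N 0 1 = 0) :
    l.prod 0 1 = 0 ∧ ∀ i, l.prod i i = (l.map fun N => N i i).prod := by
  induction l with
  | nil => simp
  | cons N l ih =>
    obtain ⟨hN, hl⟩ := List.forall_mem_cons.mp hl
    obtain ⟨ih₀₁, ih⟩ := ih hl
    simp [Matrix.mul_apply, hN, ih₀₁, ih, Fin.forall_fin_two]

lemma natDegree_eq_one_and_coeff_one_pow_of_comp [IsDomain R] {p P : R[X]}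
    (hp : p.Monic) (hp₀ : p.natDegree ≠ 0) (hle : (p.comp P).natDegree ≤ p.natDegree)
    (hcoeff : (p.comp P).coeff p.natDegree ≠ 0) :
    P.natDegree = 1 ∧ P.coeff 1 ^ p.natDegree = (p.comp P).coeff p.natDegree := by
  have hcomp : (p.comp P).natDegree = p.natDegree :=
    natDegree_eq_of_le_of_coeff_ne_zero hle hcoeff
  have hP : P.natDegree = 1 := by
    rw [natDegree_comp] at hcomp
    exact Nat.eq_of_mul_eq_mul_left (Nat.pos_of_ne_zero hp₀) (by rw [hcomp, mul_one])
  have hlead := leadingCoeff_comp (p := p) (q := P) (by rw [hP]; exact one_ne_zero)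
  rw [hp.leadingCoeff, one_mul, leadingCoeff, leadingCoeff, hcomp, hP] at hlead
  exact ⟨hP, hlead.symm⟩

end PolynomialMatrix

section TriangularPairs

variable {R : Type} [CommRing R]

/-- The one-parameter subgroup of upper triangular matrices with diagonal `(u, u⁻¹)`, conjugate to
the diagonal one by a unipotent matrix. -/
def upperHom : Rˣ →* SL2 R where
  toFun u := ⟨!![↑u, subInv u; 0, ↑u⁻¹], by simp⟩
  map_one' := Subtype.ext <| by
    simp [subInv, Matrix.one_fin_two]
  map_mul' u v := Subtype.ext <| by
    change !![_, _; _, _] = !![↑u, subInv u; 0, ↑u⁻¹] * !![↑v, subInv v; 0, ↑v⁻¹]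
    simp only [Matrix.mul_fin_two, subInv, mul_inv, Units.val_mul]
    ring_nf

/-- The one-parameter subgroup of lower triangular matrices with diagonal `(u, u⁻¹)`; it is diagonal
for `z = 0`, and for `z = -1` it has a common eigenvector with `upperHom`. -/
def lowerHom (z : R) : Rˣ →* SL2 R where
  toFun u := ⟨!![↑u, 0; z * subInv u, ↑u⁻¹], by simp⟩
  map_one' := Subtype.ext <| by
    simp [subInv, Matrix.one_fin_two]
  map_mul' u v := Subtype.ext <| by
    change !![_, _; _, _] = !![↑u, 0; z * subInv u, ↑u⁻¹] * !![↑v, 0; z * subInv v, ↑v⁻¹]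
    simp only [Matrix.mul_fin_two, subInv, mul_inv, Units.val_mul]
    ring_nf

lemma coe_upperHom (u : Rˣ) :
    (upperHom u : Matrix (Fin 2) (Fin 2) R) = !![↑u, subInv u; 0, ↑u⁻¹] := rfl

lemma coe_lowerHom (z : R) (u : Rˣ) :
    (lowerHom z u : Matrix (Fin 2) (Fin 2) R) = !![↑u, 0; z * subInv u, ↑u⁻¹] := rfl

lemma coe_upperHom_mul_lowerHom (z : R) (u v : Rˣ) :
    ((upperHom u * lowerHom z v : SL2 R) : Matrix (Fin 2) (Fin 2) R) =
      !![↑(u * v) + z * (subInv u * subInv v), subInv u * ↑v⁻¹;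
        z * (↑u⁻¹ * subInv v), ↑(u * v)⁻¹] := by
  rw [Matrix.SpecialLinearGroup.coe_mul, coe_upperHom, coe_lowerHom, Matrix.mul_fin_two]
  simp only [mul_inv, Units.val_mul]
  ring_nf

lemma trPoint_upperHom_lowerHom (z : R) (u v : Rˣ) :
    trPoint (upperHom u) (lowerHom z v) =
      ![addInv u, addInv (u * v) + z * (subInv u * subInv v), addInv v] := by
  rw [trPoint, coe_upperHom_mul_lowerHom, coe_upperHom, coe_lowerHom]
  simp only [Matrix.trace_fin_two_of, addInv, add_right_comm]

lemma trPoint_diagonal (u v : Rˣ) :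
    trPoint (lowerHom 0 u) (lowerHom 0 v) = ![addInv u, addInv (u * v), addInv v] := by
  simp only [trPoint, ← map_mul, coe_lowerHom, Matrix.trace_fin_two_of, addInv]

lemma trPoint_upperHom_lowerHom_zero (u v : Rˣ) :
    trPoint (upperHom u) (lowerHom 0 v) = trPoint (lowerHom 0 u) (lowerHom 0 v) := by
  rw [trPoint_upperHom_lowerHom, trPoint_diagonal, zero_mul, add_zero]

lemma trPoint_upperHom_lowerHom_neg_one (u v : Rˣ) :
    trPoint (upperHom u) (lowerHom (-1) v) = trPoint (lowerHom 0 u) (lowerHom 0 v⁻¹) := by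
  rw [trPoint_upperHom_lowerHom, trPoint_diagonal, neg_one_mul, ← sub_eq_add_neg, addInv_mul_sub,
    addInv_inv]

lemma coe_upperHom_mul_lowerHom_X (u v : Rˣ) :
    (upperHom (Units.map (C : R →+* R[X]) u) * lowerHom X (Units.map (C : R →+* R[X]) v) :
        SL2 R[X]).1 =
      !![C (subInv u * subInv v) * X + C (u * v : R), C (subInv u * ↑v⁻¹);
        C (↑u⁻¹ * subInv v) * X, C ↑(u * v)⁻¹] := by
  simp only [coe_upperHom_mul_lowerHom, subInv_map, ← map_mul, ← map_inv, Units.coe_map,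
    MonoidHom.coe_coe, Units.val_mul, X_mul_C, add_comm]

lemma natDegree_upperHom_mul_lowerHom_X_le (u v : Rˣ) (i j : Fin 2) :
    ((upperHom (Units.map (C : R →+* R[X]) u) * lowerHom X (Units.map (C : R →+* R[X]) v) :
        SL2 R[X]).1 i j).natDegree ≤ 1 := by
  rw [coe_upperHom_mul_lowerHom_X]
  revert i j
  exact Fin.forall_fin_two.mpr
    ⟨Fin.forall_fin_two.mpr ⟨natDegree_linear_le, (natDegree_C _).trans_le zero_le_one⟩,
      Fin.forall_fin_two.mpr ⟨(natDegree_C_mul_le _ _).trans natDegree_X_le,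
        (natDegree_C _).trans_le zero_le_one⟩⟩

lemma coeff_one_upperHom_mul_lowerHom_X (u v : Rˣ) :
    (upperHom (Units.map (C : R →+* R[X]) u) * lowerHom X (Units.map (C : R →+* R[X]) v) :
        SL2 R[X]).1.map (coeff · 1) =
      !![subInv u * subInv v, 0; ↑u⁻¹ * subInv v, 0] := by
  rw [coe_upperHom_mul_lowerHom_X]
  ext i j
  fin_cases i <;> fin_cases j <;> simp [coeff_C]

end TriangularPairs

section WordTraces

lemma wordEval_wordOf {G : Type*} [Group G] {r : ℕ} (a b : Fin r → ℤ) (x y : G) :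
    wordEval (wordOf a b) x y = (List.ofFn fun i => x ^ a i * y ^ b i).prod := by
  rw [wordEval, wordOf, map_list_prod, List.map_ofFn]
  congr 2
  ext i
  simp

lemma prod_zpow_eq_zpow_sum {ι G : Type*} [CommGroup G] (s : Finset ι) (x : G) (k : ι → ℤ) :
    ∏ i ∈ s, x ^ k i = x ^ ∑ i ∈ s, k i := by
  induction s using Finset.cons_induction with
  | empty => simp
  | cons i s hi ih => rw [Finset.prod_cons, Finset.sum_cons, ih, _root_.zpow_add]

lemma wordEval_wordOf_of_comm {G : Type*} [CommGroup G] {r : ℕ} (a b : Fin r → ℤ) (x y : G) :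
    wordEval (wordOf a b) x y = x ^ (∑ i, a i) * y ^ (∑ i, b i) := by
  rw [wordEval_wordOf, List.prod_ofFn, Finset.prod_mul_distrib, prod_zpow_eq_zpow_sum,
    prod_zpow_eq_zpow_sum]

lemma wordEval_map {G H : Type*} [Group G] [Group H] (φ : G →* H) (w : FreeGroup (Fin 2))
    (x y : G) : wordEval w (φ x) (φ y) = φ (wordEval w x y) := by
  have hlift : FreeGroup.lift ![φ x, φ y] = φ.comp (FreeGroup.lift ![x, y]) := by
    ext i
    fin_cases i <;> simp
  exact DFunLike.congr_fun hlift w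

variable {R : Type} [CommRing R] {r : ℕ} (a b : Fin r → ℤ)

lemma trace_wordEval_diagonal (m n : Rˣ) :
    trace (wordEval (wordOf a b) (lowerHom 0 m) (lowerHom 0 n) : SL2 R).1 =
      addInv (m ^ (∑ i, a i) * n ^ (∑ i, b i)) := by
  rw [wordEval_map, wordEval_wordOf_of_comm, coe_lowerHom, Matrix.trace_fin_two_of, addInv]

lemma coe_wordEval_wordOf (x y : SL2 R) :
    (wordEval (wordOf a b) x y).1 = (List.ofFn fun i => (x ^ a i * y ^ b i).1).prod := by
  rw [wordEval_wordOf]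
  let coeHom : SL2 R →* Matrix (Fin 2) (Fin 2) R :=
    (Units.coeHom _).comp Matrix.SpecialLinearGroup.toGL
  exact (map_list_prod coeHom _).trans (by rw [List.map_ofFn]; rfl)

/-- The trace of `w` at `upperHom m` and `lowerHom z n`, as a polynomial in the parameter `z`. -/
noncomputable def genericTrace (w : FreeGroup (Fin 2)) (m n : Rˣ) : R[X] :=
  trace (wordEval w (upperHom (Units.map (C : R →+* R[X]) m))
    (lowerHom X (Units.map (C : R →+* R[X]) n))).1

lemma natDegree_genericTrace_wordOf_le (m n : Rˣ) :
    (genericTrace (wordOf a b) m n).natDegree ≤ r := by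
  have hentry (i : Fin 2) := natDegree_matrix_list_prod_le _ 1
    (List.forall_mem_ofFn_iff.mpr fun k =>
      natDegree_upperHom_mul_lowerHom_X_le (m ^ a k) (n ^ b k)) i i
  simp only [List.length_ofFn, mul_one, map_zpow] at hentry
  rw [genericTrace, coe_wordEval_wordOf, Matrix.trace_fin_two]
  exact natDegree_add_le_of_degree_le (hentry 0) (hentry 1)

lemma coeff_genericTrace_wordOf (hr : 0 < r) (m n : Rˣ) :
    (genericTrace (wordOf a b) m n).coeff r =
      (∏ i, subInv (m ^ a i)) * ∏ i, subInv (n ^ b i) := by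
  have hentry (i : Fin 2) := coeff_matrix_list_prod _ 1
    (List.forall_mem_ofFn_iff.mpr fun k =>
      natDegree_upperHom_mul_lowerHom_X_le (m ^ a k) (n ^ b k)) i i
  obtain ⟨-, hdiag⟩ := list_prod_lowerTriangular_diag
    (List.ofFn fun k => !![subInv (m ^ a k) * subInv (n ^ b k), 0;
      ↑(m ^ a k)⁻¹ * subInv (n ^ b k), 0]) (List.forall_mem_ofFn_iff.mpr fun k => rfl)
  simp only [List.length_ofFn, mul_one, List.map_ofFn, Function.comp_def,
    coeff_one_upperHom_mul_lowerHom_X, hdiag] at hentry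
  simp only [map_zpow] at hentry
  rw [genericTrace, coe_wordEval_wordOf, Matrix.trace_fin_two, coeff_add, hentry 0, hentry 1]
  simp [List.prod_ofFn, Finset.prod_mul_distrib, hr.ne']

end WordTraces

section DicksonRootPair

variable {r : ℕ} {a b : Fin r → ℤ}

/-- Two ring elements `g` and `h` with prescribed Dickson polynomials `D_r(g)` and `D_r(h)` and with
`(g - h) ^ r` equal to the leading coefficient of the generic trace of `wordOf a b`. This is
what the argument extracts from the Dickson decomposition at the eigenvalues `m` and `n`, in a form
that is symmetric in `(a, m)` and `(b, n)`. -/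
def HasDicksonRootPair {R : Type*} [CommRing R] (a b : Fin r → ℤ) (m n : Rˣ) : Prop :=
  ∃ g h : R, (g - h) ^ r = (∏ i, subInv (m ^ a i)) * ∏ i, subInv (n ^ b i) ∧
    (dickson 1 (1 : R) r).eval g = addInv (m ^ (∑ i, a i) * n ^ (∑ i, b i)) ∧
    (dickson 1 (1 : R) r).eval h = addInv (m ^ (∑ i, a i) * (n ^ (∑ i, b i))⁻¹)

lemma HasDicksonRootPair.symm {R : Type*} [CommRing R] {m n : Rˣ}
    (hpair : HasDicksonRootPair a b m n) : HasDicksonRootPair b a n m := by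
  obtain ⟨g, h, hsub, hg, hh⟩ := hpair
  refine ⟨g, h, by rw [hsub, mul_comm], by rw [hg, mul_comm], ?_⟩
  rw [hh, ← addInv_inv, mul_inv, inv_inv, mul_comm]

variable {K R : Type} [CommRing K] [CommRing R] [Algebra K R]

lemma trace_wordEval_eq_eval_dickson {w : FreeGroup (Fin 2)} {f : MvPolynomial (Fin 3) ℤ}
    (hf : IsTracePolynomial w f) {q : MvPolynomial (Fin 3) K}
    (hdec : MvPolynomial.map (Int.castRingHom K) f = aeval q (dickson 1 (1 : K) r))
    (x y : SL2 R) :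
    trace (wordEval w x y).1 =
      (dickson 1 (1 : R) r).eval (MvPolynomial.aeval (trPoint x y) q) := by
  have hcast : Int.castRingHom R = (algebraMap K R).comp (Int.castRingHom K) :=
    RingHom.ext_int _ _
  rw [hf R x y, hcast, ← MvPolynomial.map_map, hdec, MvPolynomial.eval_map,
    ← MvPolynomial.aeval_def, ← aeval_algHom_apply, aeval_def, eval₂_eq_eval_map, map_dickson,
    map_one]

lemma eval_aeval_trPoint_lowerHom_X (q : MvPolynomial (Fin 3) K) (m n : Rˣ) (z : R) :
    (MvPolynomial.aeval (trPoint (upperHom (Units.map (C : R →+* R[X]) m))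
        (lowerHom X (Units.map (C : R →+* R[X]) n))) q).eval z =
      MvPolynomial.aeval (trPoint (upperHom m) (lowerHom z n)) q := by
  have hpoint : (fun i => (trPoint (upperHom (Units.map (C : R →+* R[X]) m))
      (lowerHom X (Units.map (C : R →+* R[X]) n)) i).eval z) =
      trPoint (upperHom m) (lowerHom z n) := by
    ext i
    fin_cases i <;> simp [trPoint_upperHom_lowerHom, ← map_mul, addInv_map, subInv_map, mul_comm z]
  have hconst : (evalRingHom z).comp (algebraMap K R[X]) = algebraMap K R := by
    ext k
    simp [Polynomial.algebraMap_apply]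
  rw [← coe_evalRingHom, MvPolynomial.map_aeval, hconst, MvPolynomial.aeval_def,
    MvPolynomial.coe_eval₂Hom]
  exact congrArg (MvPolynomial.eval₂ _ · q) hpoint

theorem hasDicksonRootPair_of_dickson_decomposition [IsDomain R] (hr : 0 < r)
    {f : MvPolynomial (Fin 3) ℤ} (hf : IsTracePolynomial (wordOf a b) f)
    {q : MvPolynomial (Fin 3) K}
    (hdec : MvPolynomial.map (Int.castRingHom K) f = aeval q (dickson 1 (1 : K) r))
    {m n : Rˣ} (hm : ∀ i, subInv (m ^ a i) ≠ 0) (hn : ∀ i, subInv (n ^ b i) ≠ 0) :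
    HasDicksonRootPair a b m n := by
  set P : R[X] := MvPolynomial.aeval (trPoint (upperHom (Units.map (C : R →+* R[X]) m))
    (lowerHom X (Units.map (C : R →+* R[X]) n))) q with hP
  have htrace : genericTrace (wordOf a b) m n = (dickson 1 (1 : R) r).comp P := by
    rw [genericTrace, trace_wordEval_eq_eval_dickson hf hdec, Polynomial.comp, eval₂_eq_eval_map,
      map_dickson, map_one]
  have hdeg := natDegree_dickson 1 (1 : R) hr
  have hcoeff := coeff_genericTrace_wordOf a b hr m n
  have hne : (∏ i, subInv (m ^ a i)) * ∏ i, subInv (n ^ b i) ≠ 0 :=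
    mul_ne_zero (Finset.prod_ne_zero_iff.mpr fun i _ => hm i)
      (Finset.prod_ne_zero_iff.mpr fun i _ => hn i)
  obtain ⟨hP₁, hpow⟩ := natDegree_eq_one_and_coeff_one_pow_of_comp (P := P)
    (monic_dickson 1 (1 : R) hr) (by rw [hdeg]; exact hr.ne')
    (by rw [← htrace, hdeg]; exact natDegree_genericTrace_wordOf_le a b m n)
    (by rwa [← htrace, hdeg, hcoeff])
  rw [← htrace, hdeg, hcoeff] at hpow
  have hsub : P.eval 0 - P.eval (-1) = P.coeff 1 := by
    rw [eq_X_add_C_of_natDegree_le_one hP₁.le]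
    simp
  refine ⟨P.eval 0, P.eval (-1), by rw [hsub, hpow], ?_, ?_⟩
  · rw [hP, eval_aeval_trPoint_lowerHom_X, trPoint_upperHom_lowerHom_zero,
      ← trace_wordEval_eq_eval_dickson hf hdec, trace_wordEval_diagonal]
  · rw [hP, eval_aeval_trPoint_lowerHom_X, trPoint_upperHom_lowerHom_neg_one,
      ← trace_wordEval_eq_eval_dickson hf hdec, trace_wordEval_diagonal, _root_.inv_zpow]

end DicksonRootPair

section Valuation

variable {F Γ₀ : Type*} [Field F] [LinearOrderedCommGroupWithZero Γ₀] (v : Valuation F Γ₀)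

lemma valuation_subInv_zpow {u : Fˣ} (hu : 1 < v u) {k : ℤ} (hk : k ≠ 0) :
    v (subInv (u ^ k)) = v u ^ k.natAbs := by
  have subInv_pow {n : ℕ} (hn : n ≠ 0) : v (subInv (u ^ n)) = v u ^ n := by
    have hlt : v ↑(u ^ n)⁻¹ < v ↑(u ^ n) := by
      have hone : 1 < v u ^ n := one_lt_pow₀ hu hn
      simpa using (inv_lt_one_of_one_lt₀ hone).trans hone
    rw [subInv, v.map_sub_eq_of_lt_left hlt, Units.val_pow_eq_pow_val, map_pow]
  rw [← subInv_pow (Int.natAbs_ne_zero.mpr hk)]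
  rcases subInv_zpow_eq_or_eq_neg u k with h | h
  · rw [h]
  · rw [h, v.map_neg]

lemma valuation_addInv_zpow_mul_le {u c : Fˣ} (hu : 1 < v u) (hc : v c = 1) (k : ℤ) :
    v (addInv (u ^ k * c)) ≤ v u ^ k.natAbs := by
  have hle {l : ℤ} (hl : l ≤ k.natAbs) : v u ^ l ≤ v u ^ k.natAbs := by
    exact_mod_cast zpow_le_zpow_right₀ hu.le hl
  refine (v.map_add _ _).trans (max_le ?_ ?_)
  · simpa [hc] using hle Int.le_natAbs
  · simpa [hc] using hle (l := -k) (by lia)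

lemma pow_valuation_le_max_one_valuation_eval_dickson (L : Type*) [Field L] [Algebra L F]
    [v.IsTrivialOn L] {r : ℕ} (hr : 0 < r) (g : F) :
    v g ^ r ≤ max 1 (v ((dickson 1 (1 : F) r).eval g)) := by
  rcases le_or_gt (v g) 1 with hg | hg
  · exact (pow_le_one₀ zero_le hg).trans (le_max_left _ _)
  · have heval := valuation_aeval_eq_valuation_X_pow_natDegree_of_one_lt_valuation_X (v := v) g hg
      (monic_dickson 1 (1 : L) hr).ne_zero
    rw [natDegree_dickson 1 1 hr, aeval_def, eval₂_eq_eval_map, map_dickson, map_one] at heval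
    exact heval.symm.le.trans (le_max_right _ _)

lemma sum_natAbs_le_natAbs_sum_of_hasDicksonRootPair {L : Type*} [Field L] [Algebra L F]
    [v.IsTrivialOn L] {r : ℕ} (hr : 0 < r) {a b : Fin r → ℤ} (ha : ∀ i, a i ≠ 0)
    {m : Fˣ} (hm : 1 < v m) {c : Lˣ} (hc : ∀ i, subInv (c ^ b i) ≠ 0)
    (hpair : HasDicksonRootPair a b m (Units.map (algebraMap L F) c)) :
    ∑ i, (a i).natAbs ≤ (∑ i, a i).natAbs := by
  obtain ⟨g, h, hsub, hg, hh⟩ := hpair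
  simp only [← map_zpow, ← map_inv] at hsub hg hh
  have hroot {x : F} {u : Lˣ} (hx : (dickson 1 (1 : F) r).eval x =
      addInv (m ^ (∑ i, a i) * Units.map (algebraMap L F) u)) :
      v x ^ r ≤ v m ^ (∑ i, a i).natAbs := by
    refine (pow_valuation_le_max_one_valuation_eval_dickson v L hr x).trans (max_le ?_ ?_)
    · exact one_le_pow₀ hm.le
    · exact hx ▸ valuation_addInv_zpow_mul_le v hm (Valuation.IsTrivialOn.eq_one _ u.ne_zero) _
  have hprod : v (g - h) ^ r = v m ^ ∑ i, (a i).natAbs := by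
    rw [← map_pow, hsub, map_mul, map_prod, map_prod]
    simp only [subInv_map, valuation_subInv_zpow v hm (ha _), Finset.prod_pow_eq_pow_sum,
      Valuation.IsTrivialOn.eq_one (v := v) _ (hc _), Finset.prod_const_one, mul_one]
  rw [← pow_le_pow_iff_right₀ hm, ← hprod]
  rcases le_max_iff.mp (v.map_sub g h) with hle | hle
  · exact (pow_le_pow_left₀ zero_le hle r).trans (hroot hg)
  · exact (pow_le_pow_left₀ zero_le hle r).trans (hroot hh)

end Valuation

section PowerSeries

lemma dvd_of_prod_mul_eq_pow_card {M ι : Type*} [CommMonoidWithZero M] [IsCancelMulZero M]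
    [Fintype ι] {π c y : M} (hπ : Prime π) {f : ι → M} (hy : (∏ i, f i) * c = y ^ Fintype.card ι)
    (hc : ¬ π ∣ c) (hf : ∀ i, ¬ π ^ 2 ∣ f i) (hex : ∃ i, π ∣ f i) (i : ι) : π ∣ f i := by
  classical
  obtain ⟨j, hj⟩ := hex
  have hπy : π ∣ y := hπ.dvd_of_dvd_pow (hy ▸ (hj.trans (Finset.dvd_prod_of_mem f
    (Finset.mem_univ j))).mul_right c)
  by_contra hi
  have hdvd : π ^ Fintype.card ι ∣ ∏ k ∈ Finset.univ.erase i, f k := by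
    refine hπ.pow_dvd_of_dvd_mul_right _ (hπ.not_dvd_mul hi hc) ?_
    rw [← mul_assoc, Finset.prod_erase_mul _ _ (Finset.mem_univ i), hy]
    exact pow_dvd_pow_of_dvd hπy _
  have hle (k : ι) : emultiplicity π (f k) ≤ 1 :=
    Order.le_of_lt_add_one (emultiplicity_lt_iff_not_dvd.mpr (hf k))
  rw [pow_dvd_iff_le_emultiplicity, Finset.emultiplicity_prod hπ] at hdvd
  have hcard := hdvd.trans (Finset.sum_le_card_nsmul _ _ 1 fun k _ => hle k)
  rw [nsmul_one, Nat.cast_le, Finset.card_erase_of_mem (Finset.mem_univ i)] at hcard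
  exact (Nat.sub_lt (Fintype.card_pos_iff.mpr ⟨i⟩) one_pos).not_ge hcard

variable {L : Type*} [Field L]

lemma exists_unit_eq_C_add_X {ζ : L} (hζ : ζ ≠ 0) :
    ∃ m : (PowerSeries L)ˣ, (m : PowerSeries L) = PowerSeries.C ζ + PowerSeries.X :=
  PowerSeries.isUnit_iff_constantCoeff.mpr (by simp [hζ])

lemma X_dvd_subInv_zpow_iff {u : (PowerSeries L)ˣ} {k : ℤ} :
    PowerSeries.X ∣ subInv (u ^ k) ↔
      PowerSeries.constantCoeff (u : PowerSeries L) ^ (2 * k) = 1 := by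
  rw [PowerSeries.X_dvd_iff, ← subInv_map, subInv_eq_zero_iff, ← Units.val_eq_one, map_zpow,
    ← zpow_natCast, ← _root_.zpow_mul, mul_comm k, Units.val_zpow_eq_zpow_val]
  rfl

variable [CharZero L]

lemma X_sq_not_dvd_subInv_zpow {u : (PowerSeries L)ˣ}
    (hu : PowerSeries.coeff 1 (u : PowerSeries L) ≠ 0) {k : ℤ} (hk : k ≠ 0) :
    ¬ PowerSeries.X ^ 2 ∣ subInv (u ^ k) := by
  have not_dvd_pow : ¬ PowerSeries.X ^ 2 ∣ subInv (u ^ k.natAbs) := fun hdvd => by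
    have hcoeff := PowerSeries.X_pow_dvd_iff.mp (hdvd.mul_right (u ^ k.natAbs).val) 1 one_lt_two
    rw [subInv_mul_self, ← pow_mul, Units.val_pow_eq_pow_val, map_sub, PowerSeries.coeff_one_pow,
      PowerSeries.coeff_one, if_neg one_ne_zero, sub_zero] at hcoeff
    have hconst : PowerSeries.constantCoeff (u : PowerSeries L) ≠ 0 :=
      (PowerSeries.isUnit_iff_constantCoeff.mp u.isUnit).ne_zero
    simp [hu, hk, hconst] at hcoeff
  rcases subInv_zpow_eq_or_eq_neg u k with h | h
  · rwa [h]
  · rwa [h, dvd_neg]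

variable {r : ℕ} {a b : Fin r → ℤ}

lemma dvd_of_hasDicksonRootPair_of_isPrimitiveRoot (ha : ∀ i, a i ≠ 0)
    {c : Lˣ} (hc : ∀ i, subInv (c ^ b i) ≠ 0) {m : (PowerSeries L)ˣ}
    (hm : PowerSeries.coeff 1 (m : PowerSeries L) ≠ 0) {j : Fin r}
    (hζ : IsPrimitiveRoot (PowerSeries.constantCoeff (m : PowerSeries L)) (2 * (a j).natAbs))
    (hpair : HasDicksonRootPair a b m (Units.map (algebraMap L (PowerSeries L)) c)) (i : Fin r) :
    a j ∣ a i := by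
  have X_dvd_iff (i : Fin r) : PowerSeries.X ∣ subInv (m ^ a i) ↔ a j ∣ a i := by
    rw [X_dvd_subInv_zpow_iff, hζ.zpow_eq_one_iff_dvd, Nat.cast_mul, Nat.cast_ofNat,
      mul_dvd_mul_iff_left two_ne_zero, Int.natAbs_dvd]
  obtain ⟨g, h, hsub, -, -⟩ := hpair
  have hconst : ¬ PowerSeries.X ∣
      ∏ i, subInv (Units.map (algebraMap L (PowerSeries L) : L →* PowerSeries L) c ^ b i) := by
    rw [PowerSeries.X_dvd_iff, map_prod]
    simp [Finset.prod_eq_zero_iff, ← map_zpow, subInv_map, hc]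
  rw [← X_dvd_iff]
  exact dvd_of_prod_mul_eq_pow_card PowerSeries.X_prime (by rw [Fintype.card_fin, hsub]) hconst
    (fun i => X_sq_not_dvd_subInv_zpow hm (ha i)) ⟨j, (X_dvd_iff j).mpr dvd_rfl⟩ i

end PowerSeries

section Combination

lemma abs_eq_self_or_abs_eq_neg_of_sum_abs_le {ι : Type*} [Fintype ι] {a : ι → ℤ}
    (h : ∑ i, |a i| ≤ |∑ i, a i|) : (∀ i, |a i| = a i) ∨ ∀ i, |a i| = -a i := by
  rcases abs_choice (∑ i, a i) with hs | hs
  · left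
    have hle (i : ι) : a i ≤ |a i| := le_abs_self (a i)
    have heq := (Finset.sum_le_sum fun i _ => hle i).antisymm (hs ▸ h)
    simpa [eq_comm] using (Finset.sum_eq_sum_iff_of_le fun i _ => hle i).mp heq
  · right
    have hle (i : ι) : -a i ≤ |a i| := neg_le_abs (a i)
    rw [hs, ← Finset.sum_neg_distrib] at h
    have heq := (Finset.sum_le_sum fun i _ => hle i).antisymm h
    simpa [eq_comm] using (Finset.sum_eq_sum_iff_of_le fun i _ => hle i).mp heq

variable {r : ℕ} {a b : Fin r → ℤ} {L : Type} [Field L] {c : Lˣ}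

/-- With `n = c` constant, the root pair of `HasDicksonRootPair` exists at every unit `m` of every
integral domain over `L` at which no factor of the leading coefficient vanishes. This is what allows
`m` to be specialized both at infinity and near a root of unity. -/
def HasUniversalDicksonRootPair (a b : Fin r → ℤ) (c : Lˣ) : Prop :=
  ∀ (R : Type) [CommRing R] [IsDomain R] [Algebra L R] (m : Rˣ),
    (∀ i, subInv (m ^ a i) ≠ 0) → HasDicksonRootPair a b m (Units.map (algebraMap L R) c)

namespace HasUniversalDicksonRootPair

lemma sum_abs_le_abs_sum (hpair : HasUniversalDicksonRootPair a b c) (hr : 0 < r)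
    (ha : ∀ i, a i ≠ 0) (hc : ∀ i, subInv (c ^ b i) ≠ 0) : ∑ i, |a i| ≤ |∑ i, a i| := by
  classical
  let m : (RatFunc L)ˣ := Units.mk0 RatFunc.X RatFunc.X_ne_zero
  have hm : 1 < RatFunc.inftyValuation L (m : RatFunc L) := by
    rw [Units.val_mk0, RatFunc.inftyValuation.X]
    exact WithZero.exp_lt_exp.mpr one_pos
  have hfactor (i : Fin r) : subInv (m ^ a i) ≠ 0 := by
    rw [← (RatFunc.inftyValuation L).ne_zero_iff, valuation_subInv_zpow _ hm (ha i)]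
    exact pow_ne_zero _ (zero_lt_one.trans hm).ne'
  have hnatAbs := sum_natAbs_le_natAbs_sum_of_hasDicksonRootPair (RatFunc.inftyValuation L) hr ha
    hm hc (hpair _ m hfactor)
  zify at hnatAbs
  exact hnatAbs

lemma dvd [CharZero L] [IsAlgClosed L] (hpair : HasUniversalDicksonRootPair a b c)
    (ha : ∀ i, a i ≠ 0) (hc : ∀ i, subInv (c ^ b i) ≠ 0) (i j : Fin r) : a j ∣ a i := by
  have hne : NeZero (2 * (a j).natAbs) := ⟨by simp [ha j]⟩
  obtain ⟨ζ, hζ⟩ := HasEnoughRootsOfUnity.exists_primitiveRoot L (2 * (a j).natAbs)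
  obtain ⟨m, hm⟩ := exists_unit_eq_C_add_X (hζ.ne_zero hne.ne)
  have hcoeff : PowerSeries.coeff 1 (m : PowerSeries L) ≠ 0 := by simp [hm]
  have hfactor (i : Fin r) : subInv (m ^ a i) ≠ 0 := fun h =>
    X_sq_not_dvd_subInv_zpow hcoeff (ha i) (h ▸ dvd_zero _)
  exact dvd_of_hasDicksonRootPair_of_isPrimitiveRoot ha hc hcoeff (by simpa [hm] using hζ)
    (hpair _ m hfactor) i

theorem eq [CharZero L] [IsAlgClosed L] (hpair : HasUniversalDicksonRootPair a b c) (hr : 0 < r)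
    (ha : ∀ i, a i ≠ 0) (hc : ∀ i, subInv (c ^ b i) ≠ 0) (i j : Fin r) : a i = a j := by
  have habs : |a i| = |a j| := abs_eq_abs.mpr <| Int.natAbs_eq_natAbs_iff.mp <|
    Int.natAbs_eq_of_dvd_dvd (hpair.dvd ha hc j i) (hpair.dvd ha hc i j)
  rcases abs_eq_self_or_abs_eq_neg_of_sum_abs_le (hpair.sum_abs_le_abs_sum hr ha hc) with hs | hs
  · rwa [hs, hs] at habs
  · rwa [hs, hs, neg_inj] at habs

end HasUniversalDicksonRootPair

end Combination

lemma exists_prime_charZero_quotient (K : Type*) [CommRing K] [CharZero K] :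
    ∃ p : Ideal K, p.IsPrime ∧ CharZero (K ⧸ p) := by
  let S : Submonoid K := (nonZeroDivisors ℕ).map (Nat.castRingHom K)
  have hS : Disjoint ((⊥ : Ideal K) : Set K) (S : Set K) := by
    rw [Set.disjoint_left]
    rintro _ rfl ⟨n, hn, hzero⟩
    exact nonZeroDivisors.ne_zero hn (Nat.cast_eq_zero.mp hzero)
  obtain ⟨p, hp, -, hdisj⟩ := Ideal.exists_le_prime_disjoint ⊥ S hS
  refine ⟨p, hp, charZero_of_inj_zero fun n hn => ?_⟩
  by_contra hne
  have hmem : (n : K) ∈ p := Ideal.Quotient.eq_zero_iff_mem.mp (by simpa using hn)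
  exact Set.disjoint_left.mp hdisj hmem ⟨n, mem_nonZeroDivisors_of_ne_zero hne, rfl⟩

lemma exists_isAlgClosed_charZero_algebra (K : Type) [CommRing K] [CharZero K] :
    ∃ (L : Type) (_ : Field L) (_ : Algebra K L), IsAlgClosed L ∧ CharZero L := by
  obtain ⟨p, hp, hchar⟩ := exists_prime_charZero_quotient K
  let L := AlgebraicClosure (FractionRing (K ⧸ p))
  exact ⟨L, inferInstance, Algebra.compHom L (algebraMap K (K ⧸ p)), inferInstance, inferInstance⟩

theorem word_eq_power_of_dickson_decomposition_rat_general {K : Type} [CommRing K] [CharZero K]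
    {r : ℕ} (hr : 0 < r) (a b : Fin r → ℤ) (hab : ∀ i, a i ≠ 0 ∧ b i ≠ 0)
    (f : MvPolynomial (Fin 3) ℤ) (hf : IsTracePolynomial (wordOf a b) f)
    (q : MvPolynomial (Fin 3) K)
    (hdec : MvPolynomial.map (Int.castRingHom K) f =
      Polynomial.aeval q (Polynomial.dickson 1 (1 : K) r)) :
    ∀ i, a i = a ⟨0, hr⟩ ∧ b i = b ⟨0, hr⟩ := by
  intro i
  obtain ⟨L, _, _, _, _⟩ := exists_isAlgClosed_charZero_algebra K
  let two : Lˣ := Units.mk0 2 two_ne_zero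
  have ha (i : Fin r) : subInv (two ^ a i) ≠ 0 := subInv_two_zpow_ne_zero (hab i).1
  have hb (i : Fin r) : subInv (two ^ b i) ≠ 0 := subInv_two_zpow_ne_zero (hab i).2
  have hpair_ab : HasUniversalDicksonRootPair a b two := fun R _ _ _ m hm =>
    letI := Algebra.compHom R (algebraMap K L)
    hasDicksonRootPair_of_dickson_decomposition hr hf hdec hm
      fun i => subInv_map_zpow_ne_zero _ (hb i)
  have hpair_ba : HasUniversalDicksonRootPair b a two := fun R _ _ _ m hm =>
    letI := Algebra.compHom R (algebraMap K L)
    (hasDicksonRootPair_of_dickson_decomposition hr hf hdec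
      (fun i => subInv_map_zpow_ne_zero _ (ha i)) hm).symm
  exact ⟨hpair_ab.eq hr (fun i => (hab i).1) hb i _, hpair_ba.eq hr (fun i => (hab i).2) ha i _⟩

theorem word_eq_power_of_dickson_decomposition_rat {r : ℕ} (hr : 0 < r)
    (a b : Fin r → ℤ) (hab : ∀ i, a i ≠ 0 ∧ b i ≠ 0)
    (f : MvPolynomial (Fin 3) ℤ) (hf : IsTracePolynomial (wordOf a b) f)
    (q : MvPolynomial (Fin 3) ℚ)
    (hdec : MvPolynomial.map (Int.castRingHom ℚ) f =
      Polynomial.aeval q (Polynomial.dickson 1 (1 : ℚ) r)) :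
    ∀ i, a i = a ⟨0, hr⟩ ∧ b i = b ⟨0, hr⟩ :=
  word_eq_power_of_dickson_decomposition_rat_general hr a b hab f hf q hdec
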